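/- arXiv:1911.02820 — 2 statements merged into one kernel-verified Lean document; each statement's English description precedes it below -/
import Mathlib

section
/- Let c₀ ∈ (0, √2) and C > 0. There exists a constant K > 0, depending only on c₀ and C, with the following property: for every c ∈ [c₀, √2) and every finite energy solution ψ = u + iv of the Gross–Pitaevskii traveling wave equation with speed c on ℝ³, normalized so that ψ(x) → 1 as |x| → ∞, satisfying ∫_{ℝ³} (|∂_{x₂}ψ|² + |∂_{x₃}ψ|²) ≤ C, the real-valued functions g = (∂_{x₁}u) v − (∂_{x₁}v) u − (c/2)(|ψ|² − 1) and h = (1/2)|∂_{x₁}ψ|² − (1/4)(1 − |ψ|²)² satisfy ∫_{ℝ³} |∇g|² + ∫_{ℝ³} |∇h|² ≤ K. -/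
/-!
Write `ρ = |ψ|²`. All estimates come from one differential inequality. If
`⟨φ, Δφ⟩ = c ⟨iφ, ∂₀φ⟩ + s` with a zeroth-order term `s`, the identity
`Δ|φ|² = 2|∇φ|² + 2⟨φ, Δφ⟩` and `c² ≤ 2` give `Δ|φ|² ≥ |∇φ|² - 2|φ|² + 2s` (`Lap_sq_ge`). It is
used for `φ = ψ` and for `φ = ∂ⱼψ`, which solves the linearized equation (`Sys.Lap_deriv`).

* The maximum principle for `ρ`, whose maximum is attained or at most `1` since `ψ → 1` at
  infinity, gives `ρ ≤ 2` (`sup_bound`).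
* Bernstein's method, that is the maximum principle on unit balls for `η²|∂₀ψ|² + 81 ρ` with
  `η = 1 - |x - y|²`, bounds `|∂₀ψ|²` by `810` (`bernstein_bound`).
* Testing the inequality for `∂ⱼψ`, `j` transverse, against dilated cutoffs gives
  `∫ |∇∂ⱼψ|² ≤ (B + 4) ∫ |∂ⱼψ|²` (`energy_bound`). Hence every second derivative of `ψ` except
  `∂₀∂₀ψ` is bounded in `L²` by the transverse energy.

The missing derivative `∂₀∂₀ψ` is never needed. The functions `g` and `h` are first integrals of the
one-dimensional equation, so `∂₀g = ⟨iψ, Δ_⊥ψ⟩` and `∂₀h = -⟨∂₀ψ, Δ_⊥ψ⟩` with `Δ_⊥` the Laplacian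
in the two transverse variables, and a transverse derivative of `g` or `h` is a sum of products of
one transverse derivative `∂ⱼψ` or `∂ⱼ∂₀ψ` with bounded factors. So `|∇g|² + |∇h|²` is pointwise at
most a constant times `∑ⱼ (|∇∂ⱼψ|² + |∂ⱼψ|²)`, the sum over transverse `j`.
-/

open MeasureTheory Filter Complex Metric Topology

noncomputable section

abbrev Ed (d : ℕ) := EuclideanSpace ℝ (Fin d)

/-- Partial derivative of `ψ` in the `i`-th coordinate direction. -/
def pd {d : ℕ} (ψ : Ed d → ℂ) (i : Fin d) (x : Ed d) : ℂ :=
  fderiv ℝ ψ x (EuclideanSpace.single i 1)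

/-- Laplacian of `ψ`. -/
def lap {d : ℕ} (ψ : Ed d → ℂ) (x : Ed d) : ℂ :=
  ∑ i : Fin d, fderiv ℝ (fun y => fderiv ℝ ψ y (EuclideanSpace.single i 1)) x
      (EuclideanSpace.single i 1)

/-- The Gross–Pitaevskii traveling wave equation with speed `c` on `ℝ^d`:
`ic ∂_{x₁}ψ + Δψ + (1 - |ψ|²)ψ = 0`. -/
def GPeq {d : ℕ} [NeZero d] (c : ℝ) (ψ : Ed d → ℂ) : Prop :=
  ∀ x, Complex.I * (c : ℂ) * pd ψ 0 x + lap ψ x + (1 - (‖ψ x‖ : ℂ) ^ 2) * ψ x = 0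

/-- `|∇ψ|²`. -/
def gradSq {d : ℕ} (ψ : Ed d → ℂ) (x : Ed d) : ℝ := ∑ i : Fin d, ‖pd ψ i x‖ ^ 2

/-- Energy density `(1/2)|∇ψ|² + (1/4)(1 - |ψ|²)²`. -/
def eDen {d : ℕ} (ψ : Ed d → ℂ) (x : Ed d) : ℝ :=
  1 / 2 * gradSq ψ x + 1 / 4 * (1 - ‖ψ x‖ ^ 2) ^ 2

/-- Energy `E(ψ)`. -/
def energy {d : ℕ} (ψ : Ed d → ℂ) : ℝ := ∫ x, eDen ψ x

/-- Finite energy. -/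
def FiniteEnergy {d : ℕ} (ψ : Ed d → ℂ) : Prop := Integrable (eDen ψ)

/-- Momentum `P(ψ) = -∫ ∂_{x₁}(Im ψ)(Re ψ - 1)`. -/
def mom {d : ℕ} [NeZero d] (ψ : Ed d → ℂ) : ℝ :=
  -∫ x, (pd ψ 0 x).im * ((ψ x).re - 1)

/-- Lagrangian `I^c(ψ) = E(ψ) - c P(ψ)`. -/
def lagr {d : ℕ} [NeZero d] (c : ℝ) (ψ : Ed d → ℂ) : ℝ := energy ψ - c * mom ψ

/-- `ψ` is not a constant of modulus 1. -/
def Nontriv {d : ℕ} (ψ : Ed d → ℂ) : Prop := ¬∃ z : ℂ, ‖z‖ = 1 ∧ ψ = fun _ => z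

/-- The quadratic form `Q` of the second variation of `I^c` at `ψ`:
`Q(φ) = ∫ |∇φ|² - c⟨φ, i∂₁φ⟩ - (1-|ψ|²)|φ|² + 2⟨φ,ψ⟩²` with `⟨z₁,z₂⟩ = Re (z₁ conj z₂)`. -/
def Qform {d : ℕ} [NeZero d] (c : ℝ) (ψ φ : Ed d → ℂ) : ℝ :=
  ∫ x, (gradSq φ x - c * (φ x * (starRingEnd ℂ) (Complex.I * pd φ 0 x)).re
    - (1 - ‖ψ x‖ ^ 2) * ‖φ x‖ ^ 2 + 2 * ((φ x * (starRingEnd ℂ) (ψ x)).re) ^ 2)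

/-- The Morse index of `ψ` is at most `m`: every subspace of smooth compactly supported
functions on which `Q` is negative definite has dimension at most `m`. -/
def MorseIndexLE {d : ℕ} [NeZero d] (c : ℝ) (ψ : Ed d → ℂ) (m : ℕ) : Prop :=
  ∀ Y : Submodule ℝ (Ed d → ℂ),
    (∀ φ ∈ Y, ContDiff ℝ (⊤ : ℕ∞) φ ∧ HasCompactSupport φ) →
    (∀ φ ∈ Y, φ ≠ 0 → Qform c ψ φ < 0) → Module.rank ℝ Y ≤ m

/-- `C^k_loc` convergence: uniform convergence of all iterated derivatives on every
compact set. -/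
def LocCk {d : ℕ} (ψn : ℕ → Ed d → ℂ) (ψ : Ed d → ℂ) : Prop :=
  ∀ (k : ℕ) (K : Set (Ed d)), IsCompact K →
    TendstoUniformlyOn (fun n => iteratedFDeriv ℝ k (ψn n)) (iteratedFDeriv ℝ k ψ) atTop K

/-- `|∇f|²` for a real-valued function. -/
def gradSqR {d : ℕ} (f : Ed d → ℝ) (x : Ed d) : ℝ :=
  ∑ i : Fin d, (fderiv ℝ f x (EuclideanSpace.single i 1)) ^ 2

/-- The set where `|ψ| < r`. -/
def Sset {d : ℕ} (ψ : Ed d → ℂ) (r : ℝ) : Set (Ed d) := {x | ‖ψ x‖ < r}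

/-! ### Calculus of coordinate derivatives -/

/-- The `i`-th coordinate derivative of a real-valued function on `ℝ³`. -/
def D (i : Fin 3) (f : Ed 3 → ℝ) (x : Ed 3) : ℝ := fderiv ℝ f x (EuclideanSpace.single i 1)

/-- The Laplacian of a real-valued function on `ℝ³`. -/
def Lap (f : Ed 3 → ℝ) (x : Ed 3) : ℝ := ∑ i, D i (D i f) x

/-- Smoothness of a real-valued function on `ℝ³`. -/
abbrev Sm (f : Ed 3 → ℝ) : Prop := ContDiff ℝ (⊤ : ℕ∞) f

lemma Sm.diff {f : Ed 3 → ℝ} (hf : Sm f) : Differentiable ℝ f :=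
  hf.differentiable (by simp)

lemma Sm.d {f : Ed 3 → ℝ} (hf : Sm f) (i : Fin 3) : Sm (D i f) := by
  have h : ContDiff ℝ (⊤ : ℕ∞) (fderiv ℝ f) := hf.fderiv_right (by simp)
  exact h.clm_apply contDiff_const

lemma Sm.lap {f : Ed 3 → ℝ} (hf : Sm f) : Sm (Lap f) :=
  ContDiff.sum fun i _ => (hf.d i).d i

lemma D_const (i : Fin 3) (r : ℝ) (x : Ed 3) : D i (fun _ => r) x = 0 := by
  simp [D]

lemma D_add {f g : Ed 3 → ℝ} (i : Fin 3) (hf : Sm f) (hg : Sm g) (x : Ed 3) :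
    D i (fun x => f x + g x) x = D i f x + D i g x := by
  unfold D
  rw [fderiv_fun_add (hf.diff x) (hg.diff x)]; rfl

lemma D_sub {f g : Ed 3 → ℝ} (i : Fin 3) (hf : Sm f) (hg : Sm g) (x : Ed 3) :
    D i (fun x => f x - g x) x = D i f x - D i g x := by
  unfold D
  rw [fderiv_fun_sub (hf.diff x) (hg.diff x)]; rfl

lemma D_mul {f g : Ed 3 → ℝ} (i : Fin 3) (hf : Sm f) (hg : Sm g) (x : Ed 3) :
    D i (fun x => f x * g x) x = f x * D i g x + D i f x * g x := by
  unfold D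
  rw [fderiv_fun_mul (hf.diff x) (hg.diff x)]
  simp [mul_comm]

lemma D_smul {f : Ed 3 → ℝ} (i : Fin 3) (r : ℝ) (hf : Sm f) (x : Ed 3) :
    D i (fun x => r * f x) x = r * D i f x := by
  rw [D_mul i contDiff_const hf, D_const]; ring

lemma D_comm {f : Ed 3 → ℝ} (i j : Fin 3) (hf : Sm f) (x : Ed 3) :
    D i (D j f) x = D j (D i f) x := by
  have h2 : Differentiable ℝ (fderiv ℝ f) :=
    (hf.fderiv_right (m := (⊤ : ℕ∞)) (by simp)).differentiable (by simp)
  have key : ∀ v w : Ed 3, fderiv ℝ (fun y => fderiv ℝ f y v) x w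
      = fderiv ℝ (fderiv ℝ f) x w v := by
    intro v w
    rw [fderiv_clm_apply (h2 x) (differentiableAt_const v)]
    simp
  have hs : IsSymmSndFDerivAt ℝ f x :=
    hf.contDiffAt.isSymmSndFDerivAt (by
      rw [minSmoothness_of_isRCLikeNormedField]; exact WithTop.coe_le_coe.2 le_top)
  unfold D
  rw [key, key]
  exact hs _ _

lemma Lap_D {f : Ed 3 → ℝ} (j : Fin 3) (hf : Sm f) (x : Ed 3) :
    Lap (D j f) x = D j (Lap f) x := by
  have e : Lap f = fun x => D 0 (D 0 f) x + D 1 (D 1 f) x + D 2 (D 2 f) x := by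
    funext y; simp [Lap, Fin.sum_univ_three]
  have c : ∀ i, D i (D i (D j f)) x = D j (D i (D i f)) x := by
    intro i
    have : D i (D j f) = D j (D i f) := funext (D_comm i j hf)
    rw [this, D_comm i j (hf.d i)]
  rw [e, D_add j (((hf.d 0).d 0).add ((hf.d 1).d 1)) ((hf.d 2).d 2),
    D_add j ((hf.d 0).d 0) ((hf.d 1).d 1)]
  simp [Lap, Fin.sum_univ_three, c]

/-- At a local maximum every pure second derivative is nonpositive. -/
lemma DD_nonpos {f : Ed 3 → ℝ} (hf : Sm f) {z : Ed 3} (hz : IsLocalMax f z) (i : Fin 3) :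
    D i (D i f) z ≤ 0 := by
  by_contra! hpos
  set e : Ed 3 := EuclideanSpace.single i 1 with he
  have hline : ∀ t : ℝ, HasDerivAt (fun t : ℝ => z + t • e) e t := by
    intro t
    simpa using ((hasDerivAt_id t).smul_const e).const_add z
  have h1 : ∀ F : Ed 3 → ℝ, Sm F → ∀ t : ℝ,
      HasDerivAt (fun t : ℝ => F (z + t • e)) (D i F (z + t • e)) t := by
    intro F hF t
    exact (hF.diff (z + t • e)).hasFDerivAt.comp_hasDerivAt t (hline t)
  have d1 : deriv (fun t : ℝ => f (z + t • e)) = fun t => D i f (z + t • e) :=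
    funext fun t => (h1 f hf t).deriv
  have d2 : deriv (deriv (fun t : ℝ => f (z + t • e))) 0 = D i (D i f) z := by
    rw [d1, (h1 _ (hf.d i) 0).deriv]; simp
  have hcont : ContinuousAt (fun t : ℝ => z + t • e) 0 := (hline 0).continuousAt
  have hmax : IsLocalMax (fun t : ℝ => f (z + t • e)) 0 := by
    have : Tendsto (fun t : ℝ => z + t • e) (𝓝 0) (𝓝 z) := by
      simpa [ContinuousAt] using hcont
    have h := this.eventually hz
    filter_upwards [h] with t ht
    simpa using ht
  have hmin := isLocalMin_of_deriv_deriv_pos (by rw [d2]; exact hpos) hmax.deriv_eq_zero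
    (h1 f hf 0).continuousAt
  -- A point that is both a local maximum and a local minimum makes the function locally constant.
  have hc : (fun t : ℝ => f (z + t • e)) =ᶠ[𝓝 0] fun _ => f (z + (0 : ℝ) • e) := by
    filter_upwards [hmax, hmin] with t h1 h2 using le_antisymm h1 h2
  have : deriv (deriv (fun t : ℝ => f (z + t • e))) 0 = 0 := by
    rw [hc.deriv.deriv_eq]; simp
  rw [d2] at this
  exact hpos.ne' this

lemma Lap_nonpos {f : Ed 3 → ℝ} (hf : Sm f) {z : Ed 3} (hz : IsLocalMax f z) :
    Lap f z ≤ 0 :=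
  Finset.sum_nonpos fun i _ => DD_nonpos hf hz i

/-- `∑ᵢ (∂ᵢa)² + (∂ᵢb)²`, that is `|∇(a + ib)|²`. -/
def Gr (a b : Ed 3 → ℝ) (x : Ed 3) : ℝ := ∑ i, (D i a x ^ 2 + D i b x ^ 2)

lemma D_sq {a b : Ed 3 → ℝ} (ha : Sm a) (hb : Sm b) (i : Fin 3) :
    D i (fun x => a x ^ 2 + b x ^ 2) = fun x => 2 * (a x * D i a x + b x * D i b x) := by
  funext x
  simp only [pow_two]
  rw [D_add i (ha.mul ha) (hb.mul hb), D_mul i ha ha, D_mul i hb hb]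
  ring

lemma DD_sq {a b : Ed 3 → ℝ} (ha : Sm a) (hb : Sm b) (i : Fin 3) (x : Ed 3) :
    D i (D i (fun x => a x ^ 2 + b x ^ 2)) x
      = 2 * (D i a x ^ 2 + D i b x ^ 2) + 2 * (a x * D i (D i a) x + b x * D i (D i b) x) := by
  rw [D_sq ha hb, D_smul i 2 ((ha.mul (ha.d i)).add (hb.mul (hb.d i))),
    D_add i (ha.mul (ha.d i)) (hb.mul (hb.d i)), D_mul i ha (ha.d i), D_mul i hb (hb.d i)]
  ring

/-- If `a Δa + b Δb` equals a first-order term `c (a ∂₀b - b ∂₀a)` plus `s`, that first-order term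
is absorbed by half of the gradient produced by `Δ(a² + b²)`; only `c² ≤ 2` is used. -/
lemma Lap_sq_ge {a b : Ed 3 → ℝ} (ha : Sm a) (hb : Sm b) {c s : ℝ} (hc : c ^ 2 ≤ 2) (x : Ed 3)
    (h : a x * Lap a x + b x * Lap b x = c * (a x * D 0 b x - b x * D 0 a x) + s) :
    Gr a b x - 2 * (a x ^ 2 + b x ^ 2) + 2 * s ≤ Lap (fun x => a x ^ 2 + b x ^ 2) x := by
  have e : Lap (fun x => a x ^ 2 + b x ^ 2) x
      = 2 * Gr a b x + 2 * (a x * Lap a x + b x * Lap b x) := by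
    simp only [Lap, Gr, DD_sq ha hb, Fin.sum_univ_three]
    ring
  rw [e, h]
  simp only [Gr, Fin.sum_univ_three]
  nlinarith [sq_nonneg (D 0 b x + c * a x), sq_nonneg (D 0 a x - c * b x), sq_nonneg (D 1 b x),
    sq_nonneg (D 1 a x), sq_nonneg (D 2 b x), sq_nonneg (D 2 a x),
    mul_le_mul_of_nonneg_right hc (add_nonneg (sq_nonneg (a x)) (sq_nonneg (b x)))]

/-! ### Pointwise bounds from the maximum principle -/

lemma D_coord (i k : Fin 3) (r : ℝ) (x : Ed 3) :
    D i (fun x => x k - r) x = if i = k then 1 else 0 := by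
  have h : HasFDerivAt (fun x : Ed 3 => x k - r) (EuclideanSpace.proj k : Ed 3 →L[ℝ] ℝ) x :=
    ((EuclideanSpace.proj k : Ed 3 →L[ℝ] ℝ).hasFDerivAt).sub_const r
  unfold D
  rw [h.fderiv]
  simp [eq_comm]

lemma Sm_coord (k : Fin 3) (r : ℝ) : Sm (fun x => x k - r) :=
  (EuclideanSpace.proj k : Ed 3 →L[ℝ] ℝ).contDiff.sub contDiff_const

/-- The cutoff `1 - |x - y|²`, positive exactly in the unit ball around `y`. -/
def cutoff (y x : Ed 3) : ℝ := 1 - ∑ k, (x k - y k) * (x k - y k)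

lemma Sm_cutoff (y : Ed 3) : Sm (cutoff y) :=
  contDiff_const.sub (ContDiff.sum fun k _ => (Sm_coord k _).mul (Sm_coord k _))

lemma D_cutoff (y : Ed 3) (i : Fin 3) : D i (cutoff y) = fun x => -2 * (x i - y i) := by
  have e : cutoff y = fun x => 1 - ((x 0 - y 0) * (x 0 - y 0) + (x 1 - y 1) * (x 1 - y 1)
      + (x 2 - y 2) * (x 2 - y 2)) := by
    funext x; simp [cutoff, Fin.sum_univ_three]
  have m : ∀ k, Sm (fun x => (x k - y k) * (x k - y k)) :=
    fun k => (Sm_coord k _).mul (Sm_coord k _)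
  have d : ∀ k x, D i (fun x => (x k - y k) * (x k - y k)) x
      = 2 * (x k - y k) * (if i = k then 1 else 0) := by
    intro k x
    rw [D_mul i (Sm_coord k _) (Sm_coord k _), D_coord]; ring
  funext x
  rw [e, D_sub i contDiff_const (((m 0).add (m 1)).add (m 2)), D_add i ((m 0).add (m 1)) (m 2),
    D_add i (m 0) (m 1), D_const, d, d, d]
  fin_cases i <;> simp

lemma DD_mul {f g : Ed 3 → ℝ} (hf : Sm f) (hg : Sm g) (i : Fin 3) (x : Ed 3) :
    D i (D i (fun x => f x * g x)) x
      = f x * D i (D i g) x + 2 * (D i f x * D i g x) + D i (D i f) x * g x := by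
  have e : D i (fun x => f x * g x) = fun x => f x * D i g x + D i f x * g x :=
    funext (D_mul i hf hg)
  rw [e, D_add i (hf.mul (hg.d i)) ((hf.d i).mul hg), D_mul i hf (hg.d i), D_mul i (hf.d i) hg]
  ring

lemma D_cutoff_sq (y : Ed 3) (i : Fin 3) :
    D i (fun x => cutoff y x * cutoff y x) = fun x => -4 * (cutoff y x * (x i - y i)) := by
  funext x
  rw [D_mul i (Sm_cutoff y) (Sm_cutoff y), D_cutoff]; ring

lemma DD_cutoff_sq (y : Ed 3) (i : Fin 3) (x : Ed 3) :
    D i (D i (fun x => cutoff y x * cutoff y x)) x = 8 * (x i - y i) ^ 2 - 4 * cutoff y x := by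
  rw [D_cutoff_sq, D_smul i _ ((Sm_cutoff y).mul (Sm_coord i _)), D_mul i (Sm_cutoff y) (Sm_coord i _),
    D_cutoff, D_coord]
  simp; ring

lemma Lap_add {f g : Ed 3 → ℝ} (hf : Sm f) (hg : Sm g) (x : Ed 3) :
    Lap (fun x => f x + g x) x = Lap f x + Lap g x := by
  have e : ∀ i, D i (fun x => f x + g x) = fun x => D i f x + D i g x :=
    fun i => funext (D_add i hf hg)
  simp only [Lap, e, ← Finset.sum_add_distrib]
  exact Finset.sum_congr rfl fun i _ => D_add i (hf.d i) (hg.d i) x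

lemma Lap_smul {f : Ed 3 → ℝ} (r : ℝ) (hf : Sm f) (x : Ed 3) :
    Lap (fun x => r * f x) x = r * Lap f x := by
  have e : ∀ i, D i (fun x => r * f x) = fun x => r * D i f x :=
    fun i => funext (D_smul i r hf)
  simp only [Lap, e, Finset.mul_sum]
  exact Finset.sum_congr rfl fun i _ => D_smul i r (hf.d i) x

/-- The gradient term in `Δ(a² + b²)` absorbs the cross term created by the cutoff. -/
lemma Lap_cutoff_mul_ge {a b : Ed 3 → ℝ} (ha : Sm a) (hb : Sm b) (y x : Ed 3)
    (h0 : 0 ≤ cutoff y x)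
    (h : Gr a b x - 4 * (a x ^ 2 + b x ^ 2) ≤ Lap (fun x => a x ^ 2 + b x ^ 2) x) :
    -80 * (a x ^ 2 + b x ^ 2)
      ≤ Lap (fun x => cutoff y x * cutoff y x * (a x ^ 2 + b x ^ 2)) x := by
  have hE : Sm (fun x => cutoff y x * cutoff y x) := (Sm_cutoff y).mul (Sm_cutoff y)
  have hP : Sm (fun x => a x ^ 2 + b x ^ 2) := (ha.pow 2).add (hb.pow 2)
  set n := cutoff y x with hn
  have hr : ∑ k, (x k - y k) ^ 2 = 1 - n := by simp [hn, cutoff, pow_two]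
  have hr0 : 0 ≤ ∑ k, (x k - y k) ^ 2 := Finset.sum_nonneg fun k _ => sq_nonneg _
  have e : Lap (fun x => cutoff y x * cutoff y x * (a x ^ 2 + b x ^ 2)) x
      = n * n * Lap (fun x => a x ^ 2 + b x ^ 2) x
        - 16 * n * ∑ i, (x i - y i) * (a x * D i a x + b x * D i b x)
        + (8 * ∑ k, (x k - y k) ^ 2 - 12 * n) * (a x ^ 2 + b x ^ 2) := by
    have d : ∀ i, D i (D i (fun x => cutoff y x * cutoff y x * (a x ^ 2 + b x ^ 2))) x
        = n * n * D i (D i (fun x => a x ^ 2 + b x ^ 2)) x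
          - 16 * n * ((x i - y i) * (a x * D i a x + b x * D i b x))
          + (8 * (x i - y i) ^ 2 - 4 * n) * (a x ^ 2 + b x ^ 2) := by
      intro i
      rw [DD_mul hE hP, DD_cutoff_sq, D_cutoff_sq, congrFun (D_sq ha hb i) x]
      ring
    simp only [Lap, d, Fin.sum_univ_three]
    ring
  have cross : ∀ i, 16 * n * ((x i - y i) * (a x * D i a x + b x * D i b x))
      ≤ n * n * (D i a x ^ 2 + D i b x ^ 2) + 64 * (x i - y i) ^ 2 * (a x ^ 2 + b x ^ 2) := by
    intro i
    nlinarith [sq_nonneg (n * D i a x - 8 * (x i - y i) * a x),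
      sq_nonneg (n * D i b x - 8 * (x i - y i) * b x)]
  have crossS : 16 * n * ∑ i, (x i - y i) * (a x * D i a x + b x * D i b x)
      ≤ n * n * Gr a b x + 64 * (∑ k, (x k - y k) ^ 2) * (a x ^ 2 + b x ^ 2) := by
    simp only [Gr, Finset.mul_sum, Finset.sum_mul, ← Finset.sum_add_distrib]
    exact Finset.sum_le_sum fun i _ => cross i
  rw [e]
  rw [hr] at crossS hr0 ⊢
  have hPn : 0 ≤ a x ^ 2 + b x ^ 2 := by positivity
  have hh := mul_le_mul_of_nonneg_left h (mul_nonneg h0 h0)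
  have : (0 : ℝ) ≤ (a x ^ 2 + b x ^ 2) * (1 - n) := mul_nonneg hPn hr0
  have h2 : 0 ≤ n * (a x ^ 2 + b x ^ 2) := mul_nonneg h0 hPn
  have h3 : 0 ≤ n * ((a x ^ 2 + b x ^ 2) * (1 - n)) := mul_nonneg h0 this
  nlinarith

/-- Bernstein's interior gradient estimate: the maximum principle on a unit ball for the
function `η² (a² + b²) + 81 (u² + v²)`. -/
lemma bernstein_bound {u v a b : Ed 3 → ℝ} (hu : Sm u) (hv : Sm v) (ha : Sm a) (hb : Sm b)
    (hρ : ∀ x, u x ^ 2 + v x ^ 2 ≤ 2)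
    (hP : ∀ x, Gr a b x - 4 * (a x ^ 2 + b x ^ 2) ≤ Lap (fun x => a x ^ 2 + b x ^ 2) x)
    (hL : ∀ x, a x ^ 2 + b x ^ 2 - 8 ≤ Lap (fun x => u x ^ 2 + v x ^ 2) x) (y : Ed 3) :
    a y ^ 2 + b y ^ 2 ≤ 810 := by
  have hE : Sm (fun x => cutoff y x * cutoff y x) := (Sm_cutoff y).mul (Sm_cutoff y)
  have hPs : Sm (fun x => a x ^ 2 + b x ^ 2) := (ha.pow 2).add (hb.pow 2)
  have hρs : Sm (fun x => u x ^ 2 + v x ^ 2) := (hu.pow 2).add (hv.pow 2)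
  have hEP : Sm (fun x => cutoff y x * cutoff y x * (a x ^ 2 + b x ^ 2)) := hE.mul hPs
  have h81 : Sm (fun x => 81 * (u x ^ 2 + v x ^ 2)) := contDiff_const.mul hρs
  set w : Ed 3 → ℝ := fun x => cutoff y x * cutoff y x * (a x ^ 2 + b x ^ 2)
    + 81 * (u x ^ 2 + v x ^ 2) with hw
  have hws : Sm w := hEP.add h81
  have heta : ∀ x, cutoff y x = 1 - dist x y ^ 2 := by
    intro x
    rw [dist_eq_norm, EuclideanSpace.norm_sq_eq]
    simp [cutoff, pow_two]
  obtain ⟨z, hz, hmax⟩ := (isCompact_closedBall y 1).exists_isMaxOn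
    ⟨y, mem_closedBall_self zero_le_one⟩ hws.continuous.continuousOn
  have hwy : a y ^ 2 + b y ^ 2 ≤ w y := by
    have : cutoff y y = 1 := by simp [cutoff]
    simp only [hw, this]
    nlinarith [sq_nonneg (u y), sq_nonneg (v y)]
  have hyz : w y ≤ w z := hmax (mem_closedBall_self zero_le_one)
  suffices hwz : w z ≤ 810 by linarith
  have hz' : dist z y ≤ 1 := hz
  have h0 : 0 ≤ cutoff y z := by
    rw [heta]; nlinarith [dist_nonneg (x := z) (y := y)]
  have h1 : cutoff y z ≤ 1 := by
    rw [heta]; nlinarith [sq_nonneg (dist z y)]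
  rcases hz'.lt_or_eq with hlt | heq
  · have hloc : IsLocalMax w z :=
      hmax.isLocalMax (closedBall_mem_nhds_of_mem (by exact hlt))
    have hle := Lap_nonpos hws hloc
    rw [hw, Lap_add hEP h81, Lap_smul 81 hρs] at hle
    have k1 := Lap_cutoff_mul_ge ha hb y z h0 (hP z)
    have k2 := hL z
    have hPz : a z ^ 2 + b z ^ 2 ≤ 648 := by linarith
    have hPn : 0 ≤ a z ^ 2 + b z ^ 2 := by positivity
    have : cutoff y z * cutoff y z ≤ 1 := by nlinarith
    have := mul_le_mul_of_nonneg_right this hPn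
    have := hρ z
    simp only [hw]
    linarith
  · have : cutoff y z = 0 := by rw [heta, heq]; norm_num
    simp only [hw, this]
    linarith [hρ z]

/-- The modulus bound `|ψ|² ≤ 2`: at a maximum, `Δ|ψ|² ≤ 0` forces `ρ (ρ - 2) ≤ 0`. -/
lemma sup_bound {u v : Ed 3 → ℝ} (hu : Sm u) (hv : Sm v)
    (hL : ∀ x, 2 * (u x ^ 2 + v x ^ 2) * (u x ^ 2 + v x ^ 2 - 2)
      ≤ Lap (fun x => u x ^ 2 + v x ^ 2) x)
    (hlim : Tendsto (fun x => u x ^ 2 + v x ^ 2) (cocompact (Ed 3)) (𝓝 1)) (y : Ed 3) :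
    u y ^ 2 + v y ^ 2 ≤ 2 := by
  have hρs : Sm (fun x => u x ^ 2 + v x ^ 2) := (hu.pow 2).add (hv.pow 2)
  by_contra! hy
  have hev : ∀ᶠ x in cocompact (Ed 3), u x ^ 2 + v x ^ 2 ≤ u y ^ 2 + v y ^ 2 :=
    hlim.eventually (eventually_le_nhds (by linarith))
  obtain ⟨z, hz⟩ := hρs.continuous.exists_forall_ge' y hev
  have hle := Lap_nonpos hρs (z := z) (Eventually.of_forall hz)
  have := hL z
  have := hz y
  nlinarith

/-! ### Energy estimate -/

lemma int_by_parts {φ F : Ed 3 → ℝ} (hφ : Sm φ) (hc : HasCompactSupport φ) (hF : Sm F)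
    (i : Fin 3) : ∫ x, φ x * D i F x = -∫ x, D i φ x * F x := by
  have hc' : HasCompactSupport (D i φ) := hc.fderiv_apply ℝ _
  refine integral_mul_fderiv_eq_neg_fderiv_mul_of_integrable ?_ ?_ ?_
    (fun x _ => hφ.diff x) (fun x _ => hF.diff x)
  · exact ((hφ.d i).continuous.mul hF.continuous).integrable_of_hasCompactSupport hc'.mul_right
  · exact (hφ.continuous.mul (hF.d i).continuous).integrable_of_hasCompactSupport hc.mul_right
  · exact (hφ.continuous.mul hF.continuous).integrable_of_hasCompactSupport hc.mul_right

lemma D_compact {φ : Ed 3 → ℝ} (hc : HasCompactSupport φ) (i : Fin 3) :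
    HasCompactSupport (D i φ) := hc.fderiv_apply ℝ _

lemma Lap_eq (f : Ed 3 → ℝ) :
    Lap f = fun x => D 0 (D 0 f) x + D 1 (D 1 f) x + D 2 (D 2 f) x := by
  funext x; simp [Lap, Fin.sum_univ_three]

lemma Lap_compact {φ : Ed 3 → ℝ} (hc : HasCompactSupport φ) : HasCompactSupport (Lap φ) := by
  rw [Lap_eq]
  exact ((D_compact (D_compact hc 0) 0).add (D_compact (D_compact hc 1) 1)).add
    (D_compact (D_compact hc 2) 2)

lemma green {φ F : Ed 3 → ℝ} (hφ : Sm φ) (hc : HasCompactSupport φ) (hF : Sm F) :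
    ∫ x, φ x * Lap F x = ∫ x, Lap φ x * F x := by
  have h : ∀ i, ∫ x, φ x * D i (D i F) x = ∫ x, D i (D i φ) x * F x := by
    intro i
    rw [int_by_parts hφ hc (hF.d i), int_by_parts (hφ.d i) (D_compact hc i) hF, neg_neg]
  have i1 : ∀ i, Integrable fun x => φ x * D i (D i F) x := fun i =>
    (hφ.continuous.mul ((hF.d i).d i).continuous).integrable_of_hasCompactSupport hc.mul_right
  have i2 : ∀ i, Integrable fun x => D i (D i φ) x * F x := fun i =>
    (((hφ.d i).d i).continuous.mul hF.continuous).integrable_of_hasCompactSupport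
      (D_compact (D_compact hc i) i).mul_right
  simp only [Lap, Finset.mul_sum, Finset.sum_mul]
  rw [integral_finsetSum _ fun i _ => i1 i, integral_finsetSum _ fun i _ => i2 i]
  exact Finset.sum_congr rfl fun i _ => h i

lemma D_scale {f : Ed 3 → ℝ} (hf : Sm f) (r : ℝ) (i : Fin 3) :
    D i (fun x => f (r • x)) = fun x => r * D i f (r • x) := by
  funext x
  have h : HasFDerivAt (fun x : Ed 3 => r • x) (r • ContinuousLinearMap.id ℝ (Ed 3)) x :=
    (hasFDerivAt_id x).const_smul r
  have := (hf.diff (r • x)).hasFDerivAt.comp x h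
  unfold D
  rw [show (fun x => f (r • x)) = f ∘ fun x => r • x from rfl, this.fderiv]
  simp

/-- Smooth cutoffs equal to `1` on arbitrarily large balls whose Laplacians obey one common
upper bound: the dilates of a single bump function. -/
lemma exists_cutoffs : ∃ B : ℝ, 0 ≤ B ∧ ∀ n : ℕ, ∃ φ : Ed 3 → ℝ, Sm φ ∧ HasCompactSupport φ ∧
    (∀ x, 0 ≤ φ x) ∧ (∀ x, φ x ≤ 1) ∧ (∀ x ∈ ball (0 : Ed 3) n, φ x = 1) ∧
    ∀ x, Lap φ x ≤ B := by
  let f : ContDiffBump (0 : Ed 3) := ⟨1, 2, one_pos, one_lt_two⟩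
  have hf : Sm f := f.contDiff
  have hfc : HasCompactSupport f := f.hasCompactSupport
  obtain ⟨B, hB⟩ := (Lap_compact hfc).exists_bound_of_continuous hf.lap.continuous
  have hB0 : 0 ≤ B := (norm_nonneg _).trans (hB 0)
  refine ⟨B, hB0, fun n => ?_⟩
  set r : ℝ := ((n : ℝ) + 1)⁻¹ with hr
  have hr0 : 0 < r := by positivity
  have hr1 : r ≤ 1 := inv_le_one_of_one_le₀ (by linarith [n.cast_nonneg (α := ℝ)])
  have hsm : ∀ F : Ed 3 → ℝ, Sm F → Sm fun x => F (r • x) := fun F hF =>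
    hF.comp (contDiff_const_smul r)
  refine ⟨fun x => f (r • x), hsm f hf, hfc.comp_smul hr0.ne', fun x => f.nonneg,
    fun x => f.le_one, fun x hx => ?_, fun x => ?_⟩
  · apply f.one_of_mem_closedBall
    rw [mem_ball_zero_iff] at hx
    rw [mem_closedBall_zero_iff, norm_smul, Real.norm_of_nonneg hr0.le, hr]
    change _ ≤ (1 : ℝ)
    rw [inv_mul_le_iff₀ (by positivity)]
    linarith
  · have e : Lap (fun x => f (r • x)) x = r * r * Lap f (r • x) := by
      simp only [Lap, D_scale hf, Finset.mul_sum]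
      refine Finset.sum_congr rfl fun i _ => ?_
      rw [D_smul i r (hsm _ (hf.d i)), D_scale (hf.d i)]
      ring
    rw [e]
    have h1 : Lap f (r • x) ≤ B := (le_abs_self _).trans (hB _)
    have h2 : r * r ≤ 1 := by nlinarith
    calc r * r * Lap f (r • x) ≤ r * r * B := by gcongr
      _ ≤ 1 * B := by gcongr
      _ = B := one_mul B

/-- Testing `|∇(a + ib)|² ≤ Δ|a + ib|² + 4 |a + ib|²` against the cutoffs and letting their
supports exhaust the space. -/
lemma energy_bound {B : ℝ} (hB : ∀ n : ℕ, ∃ φ : Ed 3 → ℝ, Sm φ ∧ HasCompactSupport φ ∧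
      (∀ x, 0 ≤ φ x) ∧ (∀ x, φ x ≤ 1) ∧ (∀ x ∈ ball (0 : Ed 3) n, φ x = 1) ∧ ∀ x, Lap φ x ≤ B)
    {a b : Ed 3 → ℝ} (ha : Sm a) (hb : Sm b)
    (hP : ∀ x, Gr a b x - 4 * (a x ^ 2 + b x ^ 2) ≤ Lap (fun x => a x ^ 2 + b x ^ 2) x)
    (hi : Integrable fun x => a x ^ 2 + b x ^ 2) :
    Integrable (Gr a b) ∧ ∫ x, Gr a b x ≤ (B + 4) * ∫ x, (a x ^ 2 + b x ^ 2) := by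
  have hPs : Sm (fun x => a x ^ 2 + b x ^ 2) := (ha.pow 2).add (hb.pow 2)
  have hG : Continuous (Gr a b) := continuous_finsetSum _ fun i _ =>
    ((ha.d i).continuous.pow 2).add ((hb.d i).continuous.pow 2)
  have hG0 : ∀ x, 0 ≤ Gr a b x := fun x => Finset.sum_nonneg fun i _ => by positivity
  have cov : AECover (volume : Measure (Ed 3)) atTop fun n : ℕ => ball (0 : Ed 3) n :=
    aecover_ball tendsto_natCast_atTop_atTop
  have hon : ∀ n : ℕ, IntegrableOn (Gr a b) (ball (0 : Ed 3) n) := fun n =>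
    (hG.continuousOn.integrableOn_compact (isCompact_closedBall (0 : Ed 3) n)).mono_set
      ball_subset_closedBall
  have hbd : ∀ n : ℕ, ∫ x in ball (0 : Ed 3) n, Gr a b x
      ≤ (B + 4) * ∫ x, (a x ^ 2 + b x ^ 2) := by
    intro n
    obtain ⟨φ, hφ, hc, h0, h1, hball, hlap⟩ := hB n
    have iG : Integrable fun x => φ x * Gr a b x :=
      (hφ.continuous.mul hG).integrable_of_hasCompactSupport hc.mul_right
    have iL : Integrable fun x => φ x * Lap (fun x => a x ^ 2 + b x ^ 2) x :=
      (hφ.continuous.mul hPs.lap.continuous).integrable_of_hasCompactSupport hc.mul_right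
    have iP : Integrable fun x => φ x * (4 * (a x ^ 2 + b x ^ 2)) :=
      (hφ.continuous.mul (continuous_const.mul hPs.continuous)).integrable_of_hasCompactSupport
        hc.mul_right
    have iLP : Integrable fun x => Lap φ x * (a x ^ 2 + b x ^ 2) :=
      (hφ.lap.continuous.mul hPs.continuous).integrable_of_hasCompactSupport
        (Lap_compact hc).mul_right
    calc ∫ x in ball (0 : Ed 3) n, Gr a b x
        = ∫ x in ball (0 : Ed 3) n, φ x * Gr a b x := by
          refine setIntegral_congr_fun measurableSet_ball fun x hx => ?_
          simp [hball x hx]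
      _ ≤ ∫ x, φ x * Gr a b x :=
          setIntegral_le_integral iG (Eventually.of_forall fun x => mul_nonneg (h0 x) (hG0 x))
      _ ≤ ∫ x, (φ x * Lap (fun x => a x ^ 2 + b x ^ 2) x + φ x * (4 * (a x ^ 2 + b x ^ 2))) := by
          refine integral_mono iG (iL.add iP) fun x => ?_
          change φ x * Gr a b x ≤ _
          rw [← mul_add]
          exact mul_le_mul_of_nonneg_left (by linarith [hP x]) (h0 x)
      _ = ∫ x, (Lap φ x * (a x ^ 2 + b x ^ 2) + φ x * (4 * (a x ^ 2 + b x ^ 2))) := by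
          rw [integral_add iL iP, green hφ hc hPs, ← integral_add iLP iP]
      _ ≤ ∫ x, (B + 4) * (a x ^ 2 + b x ^ 2) := by
          refine integral_mono (iLP.add iP) (hi.const_mul _) fun x => ?_
          have hp : 0 ≤ a x ^ 2 + b x ^ 2 := by positivity
          have e1 := mul_le_mul_of_nonneg_right (hlap x) hp
          have e2 := mul_le_mul_of_nonneg_right (h1 x) hp
          change Lap φ x * (a x ^ 2 + b x ^ 2) + φ x * (4 * (a x ^ 2 + b x ^ 2)) ≤ _
          linarith
      _ = (B + 4) * ∫ x, (a x ^ 2 + b x ^ 2) := integral_const_mul _ _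
  have hint : Integrable (Gr a b) :=
    cov.integrable_of_integral_bounded_of_nonneg_ae _ hon (Eventually.of_forall hG0)
      (Eventually.of_forall hbd)
  exact ⟨hint, le_of_tendsto' (cov.integral_tendsto_of_countably_generated hint) hbd⟩

/-! ### The real system and its invariants -/

/-- The Gross–Pitaevskii equation for `ψ = u + iv`, split into real and imaginary parts. -/
structure Sys (c : ℝ) (u v : Ed 3 → ℝ) : Prop where
  su : Sm u
  sv : Sm v
  eu : ∀ x, Lap u x = c * D 0 v x - (1 - (u x ^ 2 + v x ^ 2)) * u x
  ev : ∀ x, Lap v x = -(c * D 0 u x) - (1 - (u x ^ 2 + v x ^ 2)) * v x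

lemma Sys.Lap_mod {c : ℝ} {u v : Ed 3 → ℝ} (S : Sys c u v) (hc : c ^ 2 ≤ 2) (x : Ed 3) :
    Gr u v x + 2 * (u x ^ 2 + v x ^ 2) * (u x ^ 2 + v x ^ 2 - 2)
      ≤ Lap (fun x => u x ^ 2 + v x ^ 2) x := by
  have h := Lap_sq_ge S.su S.sv (s := -((1 - (u x ^ 2 + v x ^ 2)) * (u x ^ 2 + v x ^ 2))) hc x
    (by rw [S.eu, S.ev]; ring)
  linarith

lemma D_cubic {u v w : Ed 3 → ℝ} (hu : Sm u) (hv : Sm v) (hw : Sm w) (j : Fin 3) (x : Ed 3) :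
    D j (fun x => (1 - (u x ^ 2 + v x ^ 2)) * w x) x
      = (1 - (u x ^ 2 + v x ^ 2)) * D j w x - 2 * (u x * D j u x + v x * D j v x) * w x := by
  have hP : Sm (fun x => u x ^ 2 + v x ^ 2) := (hu.pow 2).add (hv.pow 2)
  rw [D_mul j (contDiff_const.sub hP) hw, D_sub j contDiff_const hP, D_const, D_sq hu hv]
  ring

/-- Each derivative `∂ⱼψ` solves the linearized equation, which gives the differential
inequality behind both the gradient bound and the energy estimate. -/
lemma Sys.Lap_deriv {c : ℝ} {u v : Ed 3 → ℝ} (S : Sys c u v) (hc : c ^ 2 ≤ 2) (j : Fin 3)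
    (x : Ed 3) :
    Gr (D j u) (D j v) x - 4 * (D j u x ^ 2 + D j v x ^ 2)
      ≤ Lap (fun x => D j u x ^ 2 + D j v x ^ 2) x := by
  have hP : Sm (fun x => u x ^ 2 + v x ^ 2) := (S.su.pow 2).add (S.sv.pow 2)
  have hcub : ∀ w, Sm w → Sm (fun x => (1 - (u x ^ 2 + v x ^ 2)) * w x) := fun w hw =>
    (contDiff_const.sub hP).mul hw
  have e1 : Lap (D j u) x = c * D 0 (D j v) x - ((1 - (u x ^ 2 + v x ^ 2)) * D j u x
      - 2 * (u x * D j u x + v x * D j v x) * u x) := by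
    rw [Lap_D j S.su, funext S.eu, D_sub j (contDiff_const.mul (S.sv.d 0)) (hcub u S.su),
      D_smul j c (S.sv.d 0), D_cubic S.su S.sv S.su, D_comm j 0 S.sv]
  have e2 : Lap (D j v) x = -(c * D 0 (D j u) x) - ((1 - (u x ^ 2 + v x ^ 2)) * D j v x
      - 2 * (u x * D j u x + v x * D j v x) * v x) := by
    have e : Lap v = fun x => (-c) * D 0 u x - (1 - (u x ^ 2 + v x ^ 2)) * v x := by
      funext y; rw [S.ev y]; ring
    rw [Lap_D j S.sv, e, D_sub j (contDiff_const.mul (S.su.d 0)) (hcub v S.sv),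
      D_smul j (-c) (S.su.d 0), D_cubic S.su S.sv S.sv, D_comm j 0 S.su]
    ring
  have h := Lap_sq_ge (S.su.d j) (S.sv.d j)
    (s := -((1 - (u x ^ 2 + v x ^ 2)) * (D j u x ^ 2 + D j v x ^ 2))
      + 2 * (u x * D j u x + v x * D j v x) ^ 2) hc x (by rw [e1, e2]; ring)
  have : 0 ≤ (u x ^ 2 + v x ^ 2) * (D j u x ^ 2 + D j v x ^ 2) := by positivity
  nlinarith [sq_nonneg (u x * D j u x + v x * D j v x)]

/-- The function `g` in terms of the real and imaginary parts. -/
def gInv (c : ℝ) (u v : Ed 3 → ℝ) (x : Ed 3) : ℝ :=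
  D 0 u x * v x - D 0 v x * u x - c / 2 * (u x ^ 2 + v x ^ 2 - 1)

/-- The function `h` in terms of the real and imaginary parts. -/
def hInv (u v : Ed 3 → ℝ) (x : Ed 3) : ℝ :=
  1 / 2 * (D 0 u x ^ 2 + D 0 v x ^ 2) - 1 / 4 * (1 - (u x ^ 2 + v x ^ 2)) ^ 2

lemma Sm_gInv {c : ℝ} {u v : Ed 3 → ℝ} (hu : Sm u) (hv : Sm v) : Sm (gInv c u v) :=
  (((hu.d 0).mul hv).sub ((hv.d 0).mul hu)).sub
    (contDiff_const.mul (((hu.pow 2).add (hv.pow 2)).sub contDiff_const))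

lemma Sm_hInv {u v : Ed 3 → ℝ} (hu : Sm u) (hv : Sm v) : Sm (hInv u v) :=
  (contDiff_const.mul (((hu.d 0).pow 2).add ((hv.d 0).pow 2))).sub
    (contDiff_const.mul ((contDiff_const.sub ((hu.pow 2).add (hv.pow 2))).pow 2))

lemma D_gInv {c : ℝ} {u v : Ed 3 → ℝ} (hu : Sm u) (hv : Sm v) (i : Fin 3) (x : Ed 3) :
    D i (gInv c u v) x = (D i (D 0 u) x * v x - D i (D 0 v) x * u x)
      + (D 0 u x * D i v x - D 0 v x * D i u x) - c * (u x * D i u x + v x * D i v x) := by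
  have hP : Sm (fun x => u x ^ 2 + v x ^ 2) := (hu.pow 2).add (hv.pow 2)
  unfold gInv
  rw [D_sub i (((hu.d 0).mul hv).sub ((hv.d 0).mul hu))
      (contDiff_const.mul (hP.sub contDiff_const)),
    D_sub i ((hu.d 0).mul hv) ((hv.d 0).mul hu), D_mul i (hu.d 0) hv, D_mul i (hv.d 0) hu,
    D_smul i _ (hP.sub contDiff_const), D_sub i hP contDiff_const, D_const, D_sq hu hv]
  ring

lemma D_hInv {u v : Ed 3 → ℝ} (hu : Sm u) (hv : Sm v) (i : Fin 3) (x : Ed 3) :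
    D i (hInv u v) x = (D 0 u x * D i (D 0 u) x + D 0 v x * D i (D 0 v) x)
      + (1 - (u x ^ 2 + v x ^ 2)) * (u x * D i u x + v x * D i v x) := by
  have hP : Sm (fun x => u x ^ 2 + v x ^ 2) := (hu.pow 2).add (hv.pow 2)
  have hQ : Sm (fun x => D 0 u x ^ 2 + D 0 v x ^ 2) := ((hu.d 0).pow 2).add ((hv.d 0).pow 2)
  have h1 : Sm (fun x => 1 - (u x ^ 2 + v x ^ 2)) := contDiff_const.sub hP
  unfold hInv
  rw [D_sub i (contDiff_const.mul hQ) (contDiff_const.mul (h1.pow 2)), D_smul i _ hQ,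
    D_smul i _ (h1.pow 2), D_sq (hu.d 0) (hv.d 0)]
  simp only [pow_two (1 - (u _ ^ 2 + v _ ^ 2))]
  rw [D_mul i h1 h1, D_sub i contDiff_const hP, D_const, D_sq hu hv]
  ring

lemma cs (p q r s : ℝ) : (p * q + r * s) ^ 2 ≤ (p ^ 2 + r ^ 2) * (q ^ 2 + s ^ 2) := by
  nlinarith [sq_nonneg (p * s - r * q)]

lemma cs' (p q r s : ℝ) : (p * q - r * s) ^ 2 ≤ (q ^ 2 + s ^ 2) * (p ^ 2 + r ^ 2) := by
  nlinarith [sq_nonneg (p * s + r * q)]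

lemma Gr_ge_zero (u v : Ed 3 → ℝ) (j : Fin 3) (x : Ed 3) :
    D 0 (D j u) x ^ 2 + D 0 (D j v) x ^ 2 ≤ Gr (D j u) (D j v) x :=
  Finset.single_le_sum (f := fun i => D i (D j u) x ^ 2 + D i (D j v) x ^ 2)
    (fun i _ => by positivity) (Finset.mem_univ 0)

/-- The transverse Laplacian of `ψ` is controlled by the gradients of `∂₁ψ` and `∂₂ψ`. -/
lemma transverse_sq (u v : Ed 3 → ℝ) (x : Ed 3) :
    (D 1 (D 1 u) x + D 2 (D 2 u) x) ^ 2 + (D 1 (D 1 v) x + D 2 (D 2 v) x) ^ 2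
      ≤ 2 * (Gr (D 1 u) (D 1 v) x + Gr (D 2 u) (D 2 v) x) := by
  have h : ∀ j, D j (D j u) x ^ 2 + D j (D j v) x ^ 2 ≤ Gr (D j u) (D j v) x := fun j =>
    Finset.single_le_sum (f := fun i => D i (D j u) x ^ 2 + D i (D j v) x ^ 2)
      (fun i _ => by positivity) (Finset.mem_univ j)
  have h1 := h 1
  have h2 := h 2
  nlinarith [sq_nonneg (D 1 (D 1 u) x - D 2 (D 2 u) x), sq_nonneg (D 1 (D 1 v) x - D 2 (D 2 v) x)]

lemma gradSqR_eq (f : Ed 3 → ℝ) (x : Ed 3) :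
    gradSqR f x = D 0 f x ^ 2 + D 1 f x ^ 2 + D 2 f x ^ 2 := by
  simp [gradSqR, D, Fin.sum_univ_three]

/-- By the equation `∂₀g` involves only the transverse Laplacian, and the transverse derivatives
of `g` contain a transverse derivative of `ψ` in every term. -/
lemma Sys.pointwise_g {c : ℝ} {u v : Ed 3 → ℝ} (S : Sys c u v) (hc : c ^ 2 ≤ 2) (x : Ed 3)
    (hρ : u x ^ 2 + v x ^ 2 ≤ 2) (h0 : D 0 u x ^ 2 + D 0 v x ^ 2 ≤ 810) :
    gradSqR (gInv c u v) x ≤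
      4000 * ((Gr (D 1 u) (D 1 v) x + (D 1 u x ^ 2 + D 1 v x ^ 2))
        + (Gr (D 2 u) (D 2 v) x + (D 2 u x ^ 2 + D 2 v x ^ 2))) := by
  have eu := S.eu x
  have ev := S.ev x
  simp only [Lap, Fin.sum_univ_three] at eu ev
  have g0 : D 0 (gInv c u v) x ^ 2 ≤ 4 * (Gr (D 1 u) (D 1 v) x + Gr (D 2 u) (D 2 v) x) := by
    have e : D 0 (gInv c u v) x = (D 1 (D 1 v) x + D 2 (D 2 v) x) * u x
        - (D 1 (D 1 u) x + D 2 (D 2 u) x) * v x := by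
      rw [D_gInv S.su S.sv]
      linear_combination v x * eu - u x * ev
    rw [e]
    refine (cs' _ _ _ _).trans ((mul_le_mul_of_nonneg_right hρ (by positivity)).trans ?_)
    linarith [transverse_sq u v x]
  have abc : ∀ p q r : ℝ, (p + q - r) ^ 2 ≤ 3 * (p ^ 2 + q ^ 2 + r ^ 2) := fun p q r => by
    nlinarith [sq_nonneg (p - q), sq_nonneg (p + r), sq_nonneg (q + r)]
  have gj : ∀ j, D j (gInv c u v) x ^ 2
      ≤ 6 * Gr (D j u) (D j v) x + 2442 * (D j u x ^ 2 + D j v x ^ 2) := by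
    intro j
    have hPj : 0 ≤ D j u x ^ 2 + D j v x ^ 2 := by positivity
    have t1 : (D 0 (D j u) x * v x - D 0 (D j v) x * u x) ^ 2
        ≤ 2 * (D 0 (D j u) x ^ 2 + D 0 (D j v) x ^ 2) :=
      (cs' _ _ _ _).trans (mul_le_mul_of_nonneg_right (by linarith) (by positivity))
    have t2 : (D 0 u x * D j v x - D 0 v x * D j u x) ^ 2
        ≤ 810 * (D j u x ^ 2 + D j v x ^ 2) := by
      refine (cs' _ _ _ _).trans ?_
      rw [mul_comm, add_comm (D j v x ^ 2)]
      exact mul_le_mul_of_nonneg_right h0 hPj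
    have t3 : (u x * D j u x + v x * D j v x) ^ 2 ≤ 2 * (D j u x ^ 2 + D j v x ^ 2) :=
      (cs _ _ _ _).trans (mul_le_mul_of_nonneg_right hρ hPj)
    have t4 : (c * (u x * D j u x + v x * D j v x)) ^ 2 ≤ 4 * (D j u x ^ 2 + D j v x ^ 2) := by
      rw [mul_pow]
      have := mul_le_mul_of_nonneg_right hc (sq_nonneg (u x * D j u x + v x * D j v x))
      linarith
    rw [D_gInv S.su S.sv, D_comm j 0 S.su, D_comm j 0 S.sv]
    refine (abc _ _ _).trans ?_
    linarith [Gr_ge_zero u v j x]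
  rw [gradSqR_eq]
  have n1 : 0 ≤ Gr (D 1 u) (D 1 v) x := le_trans (by positivity) (Gr_ge_zero u v 1 x)
  have n2 : 0 ≤ Gr (D 2 u) (D 2 v) x := le_trans (by positivity) (Gr_ge_zero u v 2 x)
  have n3 : 0 ≤ D 1 u x ^ 2 + D 1 v x ^ 2 := by positivity
  have n4 : 0 ≤ D 2 u x ^ 2 + D 2 v x ^ 2 := by positivity
  linarith [gj 1, gj 2]

/-- The analogue of `Sys.pointwise_g` for `h`, with the same structure of terms. -/
lemma Sys.pointwise_h {c : ℝ} {u v : Ed 3 → ℝ} (S : Sys c u v) (x : Ed 3)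
    (hρ : u x ^ 2 + v x ^ 2 ≤ 2) (h0 : D 0 u x ^ 2 + D 0 v x ^ 2 ≤ 810) :
    gradSqR (hInv u v) x ≤
      4000 * ((Gr (D 1 u) (D 1 v) x + (D 1 u x ^ 2 + D 1 v x ^ 2))
        + (Gr (D 2 u) (D 2 v) x + (D 2 u x ^ 2 + D 2 v x ^ 2))) := by
  have eu := S.eu x
  have ev := S.ev x
  simp only [Lap, Fin.sum_univ_three] at eu ev
  have k0 : D 0 (hInv u v) x ^ 2 ≤ 1620 * (Gr (D 1 u) (D 1 v) x + Gr (D 2 u) (D 2 v) x) := by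
    have e : D 0 (hInv u v) x = -(D 0 u x * (D 1 (D 1 u) x + D 2 (D 2 u) x)
        + D 0 v x * (D 1 (D 1 v) x + D 2 (D 2 v) x)) := by
      rw [D_hInv S.su S.sv]
      linear_combination D 0 u x * eu + D 0 v x * ev
    rw [e, neg_sq]
    refine (cs _ _ _ _).trans ((mul_le_mul_of_nonneg_right h0 (by positivity)).trans ?_)
    linarith [transverse_sq u v x]
  have abc : ∀ p q : ℝ, (p + q) ^ 2 ≤ 2 * (p ^ 2 + q ^ 2) := fun p q => by
    nlinarith [sq_nonneg (p - q)]
  have hρ0 : 0 ≤ u x ^ 2 + v x ^ 2 := by positivity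
  have m1 : (1 - (u x ^ 2 + v x ^ 2)) ^ 2 ≤ 1 := by
    rw [sq_le_one_iff_abs_le_one, abs_le]
    constructor <;> linarith
  have kj : ∀ j, D j (hInv u v) x ^ 2
      ≤ 1620 * Gr (D j u) (D j v) x + 4 * (D j u x ^ 2 + D j v x ^ 2) := by
    intro j
    have hPj : 0 ≤ D j u x ^ 2 + D j v x ^ 2 := by positivity
    have t1 : (D 0 u x * D 0 (D j u) x + D 0 v x * D 0 (D j v) x) ^ 2
        ≤ 810 * (D 0 (D j u) x ^ 2 + D 0 (D j v) x ^ 2) :=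
      (cs _ _ _ _).trans (mul_le_mul_of_nonneg_right h0 (by positivity))
    have t3 : (u x * D j u x + v x * D j v x) ^ 2 ≤ 2 * (D j u x ^ 2 + D j v x ^ 2) :=
      (cs _ _ _ _).trans (mul_le_mul_of_nonneg_right hρ hPj)
    have t4 : ((1 - (u x ^ 2 + v x ^ 2)) * (u x * D j u x + v x * D j v x)) ^ 2
        ≤ 2 * (D j u x ^ 2 + D j v x ^ 2) := by
      rw [mul_pow]
      have := mul_le_mul_of_nonneg_right m1 (sq_nonneg (u x * D j u x + v x * D j v x))
      linarith
    rw [D_hInv S.su S.sv, D_comm j 0 S.su, D_comm j 0 S.sv]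
    refine (abc _ _).trans ?_
    linarith [Gr_ge_zero u v j x]
  rw [gradSqR_eq]
  have n1 : 0 ≤ Gr (D 1 u) (D 1 v) x := le_trans (by positivity) (Gr_ge_zero u v 1 x)
  have n2 : 0 ≤ Gr (D 2 u) (D 2 v) x := le_trans (by positivity) (Gr_ge_zero u v 2 x)
  have n3 : 0 ≤ D 1 u x ^ 2 + D 1 v x ^ 2 := by positivity
  have n4 : 0 ≤ D 2 u x ^ 2 + D 2 v x ^ 2 := by positivity
  linarith [kj 1, kj 2]

/-! ### Passage from complex to real form -/

lemma D_re {f : Ed 3 → ℂ} (hf : Differentiable ℝ f) (i : Fin 3) (x : Ed 3) :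
    D i (fun x => (f x).re) x = (pd f i x).re := by
  have := (reCLM.hasFDerivAt (x := f x)).comp x (hf x).hasFDerivAt
  unfold D pd
  rw [show (fun x => (f x).re) = reCLM ∘ f from rfl, this.fderiv]
  rfl

lemma D_im {f : Ed 3 → ℂ} (hf : Differentiable ℝ f) (i : Fin 3) (x : Ed 3) :
    D i (fun x => (f x).im) x = (pd f i x).im := by
  have := (imCLM.hasFDerivAt (x := f x)).comp x (hf x).hasFDerivAt
  unfold D pd
  rw [show (fun x => (f x).im) = imCLM ∘ f from rfl, this.fderiv]
  rfl

lemma norm_sq_eq (z : ℂ) : ‖z‖ ^ 2 = z.re ^ 2 + z.im ^ 2 := by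
  rw [Complex.sq_norm, Complex.normSq_apply]; ring

lemma Sys.of_GPeq {c : ℝ} {ψ : Ed 3 → ℂ} (hψ : ContDiff ℝ (⊤ : ℕ∞) ψ) (h : GPeq c ψ) :
    Sys c (fun x => (ψ x).re) (fun x => (ψ x).im) := by
  have hd : Differentiable ℝ ψ := hψ.differentiable (by simp)
  have hpd : ∀ i, Differentiable ℝ (pd ψ i) := fun i => by
    have h : ContDiff ℝ (⊤ : ℕ∞) (fderiv ℝ ψ) := hψ.fderiv_right (by simp)
    have h2 : ContDiff ℝ (⊤ : ℕ∞) (pd ψ i) := h.clm_apply contDiff_const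
    exact h2.differentiable (by simp)
  have hl : ∀ x, lap ψ x = pd (pd ψ 0) 0 x + pd (pd ψ 1) 1 x + pd (pd ψ 2) 2 x := fun x => by
    rw [lap, Fin.sum_univ_three]; rfl
  have lre : ∀ x, Lap (fun x => (ψ x).re) x = (lap ψ x).re := by
    intro x
    rw [hl, Lap_eq]
    simp only [funext (D_re hd _), D_re (hpd _), add_re]
  have lim : ∀ x, Lap (fun x => (ψ x).im) x = (lap ψ x).im := by
    intro x
    rw [hl, Lap_eq]
    simp only [funext (D_im hd _), D_im (hpd _), add_im]
  have key : ∀ x, (1 - (‖ψ x‖ : ℂ) ^ 2) = ((1 - ((ψ x).re ^ 2 + (ψ x).im ^ 2) : ℝ) : ℂ) := by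
    intro x
    rw [← norm_sq_eq]; push_cast; rfl
  refine ⟨reCLM.contDiff.comp hψ, imCLM.contDiff.comp hψ, fun x => ?_, fun x => ?_⟩
  · have e := congrArg Complex.re (h x)
    rw [key] at e
    simp only [add_re, mul_re, mul_im, I_re, I_im, ofReal_re, ofReal_im, zero_re] at e
    rw [lre, D_im hd]
    linarith
  · have e := congrArg Complex.im (h x)
    rw [key] at e
    simp only [add_im, mul_re, mul_im, I_re, I_im, ofReal_re, ofReal_im, zero_im] at e
    rw [lim, D_re hd]
    linarith

/-- uniform `H¹`-type bounds on the 1-D invariants `g` and `h` of finite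
energy traveling waves on `ℝ³`, under a transverse energy bound. -/
theorem statement13 (c₀ : ℝ) (hc₀ : c₀ ∈ Set.Ioo 0 (Real.sqrt 2)) (C : ℝ) (hC : 0 < C) :
    ∃ K > (0 : ℝ), ∀ c : ℝ, c₀ ≤ c → c < Real.sqrt 2 →
      ∀ ψ : Ed 3 → ℂ, ContDiff ℝ (⊤ : ℕ∞) ψ → GPeq c ψ → FiniteEnergy ψ →
        Tendsto ψ (cocompact (Ed 3)) (𝓝 1) →
        (∫ x, (‖pd ψ 1 x‖ ^ 2 + ‖pd ψ 2 x‖ ^ 2)) ≤ C →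
        ∀ g h : Ed 3 → ℝ,
          (g = fun x => (pd ψ 0 x).re * (ψ x).im - (pd ψ 0 x).im * (ψ x).re
            - c / 2 * (‖ψ x‖ ^ 2 - 1)) →
          (h = fun x => 1 / 2 * ‖pd ψ 0 x‖ ^ 2 - 1 / 4 * (1 - ‖ψ x‖ ^ 2) ^ 2) →
          Integrable (gradSqR g) ∧ Integrable (gradSqR h) ∧
            (∫ x, gradSqR g x) + (∫ x, gradSqR h x) ≤ K := by
  obtain ⟨B, hB0, hB⟩ := exists_cutoffs
  refine ⟨8000 * (B + 5) * C, by positivity, ?_⟩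
  intro c hc1 hc2 ψ hψ heq hE hlim hT g h hg hh
  have hc : c ^ 2 ≤ 2 := by
    have h0 : 0 ≤ c := hc₀.1.le.trans hc1
    nlinarith [Real.sq_sqrt (show (0 : ℝ) ≤ 2 by norm_num), Real.sqrt_nonneg 2]
  have hd : Differentiable ℝ ψ := hψ.differentiable (by simp)
  have S := Sys.of_GPeq hψ heq
  set u : Ed 3 → ℝ := fun x => (ψ x).re with hu
  set v : Ed 3 → ℝ := fun x => (ψ x).im with hv
  have hpd : ∀ i x, ‖pd ψ i x‖ ^ 2 = D i u x ^ 2 + D i v x ^ 2 := fun i x => by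
    rw [norm_sq_eq, hu, hv, D_re hd, D_im hd]
  have hmod : ∀ x, ‖ψ x‖ ^ 2 = u x ^ 2 + v x ^ 2 := fun x => norm_sq_eq _
  have hg' : g = gInv c u v := by
    rw [hg]; funext x
    simp only [gInv, hmod, hu, hv, D_re hd, D_im hd]
  have hh' : h = hInv u v := by
    rw [hh]; funext x
    simp only [hInv, hmod, hpd]
  have hlim' : Tendsto (fun x => u x ^ 2 + v x ^ 2) (cocompact (Ed 3)) (𝓝 1) := by
    have := (hlim.norm).pow 2
    simpa [hmod] using this
  have hρ := sup_bound S.su S.sv (fun x => by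
    have hG : 0 ≤ Gr u v x := Finset.sum_nonneg fun i _ => by positivity
    linarith [S.Lap_mod hc x]) hlim'
  have h0 := bernstein_bound S.su S.sv (S.su.d 0) (S.sv.d 0) hρ (S.Lap_deriv hc 0) (fun x => by
    have hG : D 0 u x ^ 2 + D 0 v x ^ 2 ≤ Gr u v x :=
      Finset.single_le_sum (f := fun i => D i u x ^ 2 + D i v x ^ 2)
        (fun i _ => by positivity) (Finset.mem_univ 0)
    nlinarith [S.Lap_mod hc x, sq_nonneg (u x ^ 2 + v x ^ 2 - 1)])
  -- The transverse gradient is dominated by the energy density.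
  have hPi : ∀ j, Integrable fun x => D j u x ^ 2 + D j v x ^ 2 := by
    intro j
    have hcont : Continuous fun x => D j u x ^ 2 + D j v x ^ 2 :=
      ((S.su.d j).continuous.pow 2).add ((S.sv.d j).continuous.pow 2)
    refine (hE.const_mul 2).mono' hcont.aestronglyMeasurable (Eventually.of_forall fun x => ?_)
    rw [Real.norm_of_nonneg (by positivity), ← hpd]
    have : ‖pd ψ j x‖ ^ 2 ≤ gradSq ψ x :=
      Finset.single_le_sum (f := fun i => ‖pd ψ i x‖ ^ 2)
        (fun i _ => by positivity) (Finset.mem_univ j)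
    have := sq_nonneg (1 - ‖ψ x‖ ^ 2)
    unfold eDen
    linarith
  have en := fun j => energy_bound hB (S.su.d j) (S.sv.d j) (S.Lap_deriv hc j) (hPi j)
  have iQ : ∀ j, Integrable fun x => Gr (D j u) (D j v) x + (D j u x ^ 2 + D j v x ^ 2) :=
    fun j => (en j).1.add (hPi j)
  have iD := ((iQ 1).add (iQ 2)).const_mul 8000
  have pw : ∀ x, gradSqR (gInv c u v) x + gradSqR (hInv u v) x ≤
      8000 * ((Gr (D 1 u) (D 1 v) x + (D 1 u x ^ 2 + D 1 v x ^ 2))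
        + (Gr (D 2 u) (D 2 v) x + (D 2 u x ^ 2 + D 2 v x ^ 2))) := fun x => by
    linarith [S.pointwise_g hc x (hρ x) (h0 x), S.pointwise_h x (hρ x) (h0 x)]
  have nn : ∀ f x, 0 ≤ gradSqR (d := 3) f x := fun f x =>
    Finset.sum_nonneg fun i _ => sq_nonneg _
  have hcont : ∀ f : Ed 3 → ℝ, Sm f → Continuous (gradSqR f) := fun f hf =>
    continuous_finsetSum _ fun i _ => (hf.d i).continuous.pow 2
  have ig : Integrable (gradSqR (gInv c u v)) :=
    iD.mono' (hcont _ (Sm_gInv S.su S.sv)).aestronglyMeasurable (Eventually.of_forall fun x => by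
      rw [Real.norm_of_nonneg (nn _ x)]
      exact (le_add_of_nonneg_right (nn _ x)).trans (pw x))
  have ih : Integrable (gradSqR (hInv u v)) :=
    iD.mono' (hcont _ (Sm_hInv S.su S.sv)).aestronglyMeasurable (Eventually.of_forall fun x => by
      rw [Real.norm_of_nonneg (nn _ x)]
      exact (le_add_of_nonneg_left (nn _ x)).trans (pw x))
  rw [hg', hh']
  refine ⟨ig, ih, ?_⟩
  simp only [hpd] at hT
  rw [integral_add (hPi 1) (hPi 2)] at hT
  rw [← integral_add ig ih]
  refine (integral_mono (ig.add ih) iD pw).trans ?_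
  have e : ∀ j, ∫ x, (Gr (D j u) (D j v) x + (D j u x ^ 2 + D j v x ^ 2))
      ≤ (B + 5) * ∫ x, (D j u x ^ 2 + D j v x ^ 2) := by
    intro j
    rw [integral_add (en j).1 (hPi j)]
    linarith [(en j).2]
  rw [integral_const_mul]
  simp only [Pi.add_apply]
  rw [integral_add (iQ 1) (iQ 2)]
  nlinarith [e 1, e 2, mul_le_mul_of_nonneg_left hT (by linarith : 0 ≤ B + 5)]
end
end

section
/- Let S ⊆ ℝ³ be a measurable set with (32π/3)² ≤ |S| < ∞, where |·| denotes Lebesgue measure, and let F : ℝ³ → [0, ∞) be integrable. Set R = |S|^{1/6} and j = ⌊ 3 |S|^{1/2} / (32π) ⌋ ≥ 1. Then there exist points x₁, …, x_j ∈ S such that the open balls B(x_i, R), 1 ≤ i ≤ j, are pairwise disjoint; in particular there exists ξ ∈ S such that ∫_{B(ξ, R)} F ≤ (1/j) ∫_{ℝ³} F. -/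
open MeasureTheory Filter Topology

/-!
The points are chosen greedily. If the balls around `m < j` points already chosen are to be avoided,
the next centre must lie outside the union of the concentric balls of radius `2R`, whose measure is
at most `m · (4π/3)(2R)³ = m · (32π/3)|S|^{1/2} < j · (32π/3)|S|^{1/2} ≤ |S|`; hence that union
does not cover `S`. Once the `j` balls are disjoint, the integrals of `F` over them add up to at
most `∫ F`, so one of them is at most the average `(1/j) ∫ F`.
-/

/-- Greedy selection of `2R`-separated points, stated by induction on their number: it can go on
as long as the balls of radius `2R` around the earlier points are too small to cover `S`. -/
lemma exists_separated_points (S : Set (EuclideanSpace ℝ (Fin 3))) (R : ℝ) (j : ℕ)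
    (h : ∀ m < j, (m : ENNReal) * (ENNReal.ofReal (2 * R) ^ 3 * ENNReal.ofReal (Real.pi * 4 / 3))
      < volume S) :
    ∃ x : Fin j → EuclideanSpace ℝ (Fin 3), (∀ i, x i ∈ S) ∧
      Pairwise fun i k => 2 * R ≤ dist (x i) (x k) := by
  induction j with
  | zero => exact ⟨Fin.elim0, fun i => i.elim0, fun i => i.elim0⟩
  | succ m ih =>
    obtain ⟨x, hxS, hx⟩ := ih fun k hk => h k (by omega)
    have hlt : volume (⋃ i, Metric.ball (x i) (2 * R)) < volume S := by
      refine lt_of_le_of_lt ?_ (h m (by omega))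
      refine (measure_iUnion_fintype_le _ _).trans ?_
      simp [EuclideanSpace.volume_ball_fin_three]
    obtain ⟨y, hyS, hy⟩ : ∃ y ∈ S, y ∉ ⋃ i, Metric.ball (x i) (2 * R) := by
      by_contra! hcon
      exact absurd (measure_mono hcon) (not_le.mpr hlt)
    have hyd : ∀ i, 2 * R ≤ dist y (x i) := by
      simpa using hy
    refine ⟨Fin.snoc x y, fun i => ?_, fun i k hik => ?_⟩
    · induction i using Fin.lastCases <;> simp [hyS, hxS]
    · induction i using Fin.lastCases with
      | last =>
        induction k using Fin.lastCases with
        | last => exact absurd rfl hik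
        | cast k => simpa using hyd k
      | cast i =>
        induction k using Fin.lastCases with
        | last => simpa [dist_comm] using hyd i
        | cast k => simpa using hx fun e => hik (by rw [e])

/-- Pigeonhole: among `j ≥ 1` pairwise disjoint measurable sets, one carries at most
the fraction `1/j` of the integral of a nonnegative function. -/
lemma exists_setIntegral_le_average {α : Type*} [MeasurableSpace α] {μ : Measure α} {F : α → ℝ}
    (hF : Integrable F μ) (hFpos : ∀ x, 0 ≤ F x) {j : ℕ} (hj : 1 ≤ j) (B : Fin j → Set α)
    (hB : ∀ i, MeasurableSet (B i)) (hd : Pairwise fun i k => Disjoint (B i) (B k)) :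
    ∃ i, (∫ y in B i, F y ∂μ) ≤ 1 / (j : ℝ) * ∫ y, F y ∂μ := by
  have hsum : ∑ i, ∫ y in B i, F y ∂μ ≤ ∫ y, F y ∂μ := by
    rw [← integral_biUnion_finset Finset.univ (fun i _ => hB i) (fun i _ k _ hik => hd hik)
      (fun i _ => hF.integrableOn)]
    exact setIntegral_le_integral hF (Eventually.of_forall hFpos)
  have hj0 : (j : ℝ) ≠ 0 := by positivity
  obtain ⟨i, -, hi⟩ := Finset.exists_le_of_sum_le (s := Finset.univ)
    (f := fun i => ∫ y in B i, F y ∂μ) (g := fun _ => 1 / (j : ℝ) * ∫ y, F y ∂μ)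
    ⟨⟨0, hj⟩, Finset.mem_univ _⟩ (by
      refine hsum.trans_eq ?_
      simp [hj0])
  exact ⟨i, hi⟩

/-- given a set `S ⊆ ℝ³` of large finite measure and an integrable
nonnegative `F`, one can find `j = ⌊3|S|^{1/2}/(32π)⌋ ≥ 1` points of `S` whose balls of
radius `R = |S|^{1/6}` are pairwise disjoint; in particular some ball centered in `S`
carries at most `(1/j) ∫ F`. -/
theorem statement14 (S : Set (EuclideanSpace ℝ (Fin 3))) (hS : MeasurableSet S)
    (hfin : volume S < ⊤)
    (hbig : ((32 * Real.pi / 3) ^ 2 : ℝ) ≤ (volume S).toReal)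
    (F : EuclideanSpace ℝ (Fin 3) → ℝ) (hF : Integrable F) (hFpos : ∀ x, 0 ≤ F x) :
    ∀ (R : ℝ) (j : ℕ), R = (volume S).toReal ^ ((1 : ℝ) / 6) →
      j = ⌊3 * (volume S).toReal ^ ((1 : ℝ) / 2) / (32 * Real.pi)⌋₊ →
      1 ≤ j ∧
      ∃ x : Fin j → EuclideanSpace ℝ (Fin 3), (∀ i, x i ∈ S) ∧
        (Pairwise fun i k => Disjoint (Metric.ball (x i) R) (Metric.ball (x k) R)) ∧
        ∃ ξ ∈ S, (∫ y in Metric.ball ξ R, F y) ≤ 1 / (j : ℝ) * ∫ y, F y := by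
  intro R j hR hj
  have hpi := Real.pi_pos
  have hV : 0 < (volume S).toReal := lt_of_lt_of_le (by positivity) hbig
  have hRpos : 0 < R := hR ▸ Real.rpow_pos_of_pos hV _
  have hR6 : R ^ 6 = (volume S).toReal := by
    rw [hR, ← Real.rpow_natCast, ← Real.rpow_mul hV.le]
    norm_num
  have hR3 : (volume S).toReal ^ ((1 : ℝ) / 2) = R ^ 3 := by
    rw [hR, ← Real.rpow_natCast, ← Real.rpow_mul hV.le]
    norm_num
  rw [hR3] at hj
  have hlow : 32 * Real.pi / 3 ≤ R ^ 3 := by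
    refine le_of_sq_le_sq (hbig.trans_eq ?_) (by positivity)
    rw [← hR6]
    ring
  have hj1 : 1 ≤ j := by
    rw [hj, Nat.one_le_floor_iff, le_div_iff₀ (by positivity)]
    linarith
  have hjle : (j : ℝ) * (32 * Real.pi) ≤ 3 * R ^ 3 := by
    rw [← le_div_iff₀ (by positivity), hj]
    exact Nat.floor_le (by positivity)
  obtain ⟨x, hxS, hx⟩ := exists_separated_points S R j fun m hm => by
    have hm' : (m : ℝ) < j := by exact_mod_cast hm
    rw [← ENNReal.ofReal_toReal hfin.ne, ← hR6, ← ENNReal.ofReal_pow (by positivity),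
      ← ENNReal.ofReal_mul (by positivity), ← ENNReal.ofReal_natCast,
      ← ENNReal.ofReal_mul (by positivity), ENNReal.ofReal_lt_ofReal_iff (by positivity)]
    calc (m : ℝ) * ((2 * R) ^ 3 * (Real.pi * 4 / 3))
        < (j : ℝ) * ((2 * R) ^ 3 * (Real.pi * 4 / 3)) := by gcongr
      _ = (j : ℝ) * (32 * Real.pi) * (R ^ 3 / 3) := by ring
      _ ≤ 3 * R ^ 3 * (R ^ 3 / 3) := by gcongr
      _ = R ^ 6 := by ring
  have hd : Pairwise fun i k => Disjoint (Metric.ball (x i) R) (Metric.ball (x k) R) :=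
    fun i k hik => Metric.ball_disjoint_ball (by linarith [hx hik])
  obtain ⟨i, hi⟩ := exists_setIntegral_le_average hF hFpos hj1 (fun i => Metric.ball (x i) R)
    (fun i => Metric.isOpen_ball.measurableSet) hd
  exact ⟨hj1, x, hxS, hd, x i, hxS i, hi⟩
end
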